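/- arXiv:1807.05917 — 2 statements merged into one kernel-verified Lean document; each statement's English description precedes it below -/
import Mathlib

section
/- Let d ∈ ℕ, let O ⊆ ℝᵈ be a nonempty compact set, let T > 0, and let u : [0,T] × O → ℝ be bounded and upper semicontinuous and v : [0,T] × O → ℝ be bounded and lower semicontinuous. For each n ∈ ℕ the supremum Θ_n := sup{ u(t, x₁) − v(t, x₂) − (n/2)·|x₁ − x₂|² : t ∈ [0,T], x₁, x₂ ∈ O } is attained at some point (t_n, x₁ⁿ, x₂ⁿ). Moreover, Θ_n → sup{ u(t,x) − v(t,x) : (t,x) ∈ [0,T] × O } as n → ∞, and there is a subsequence (n_k) along which n_k·|x₁^{n_k} − x₂^{n_k}|² → 0 as k → ∞. -/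
open Filter

set_option maxHeartbeats 600000

/-- the doubling-of-variables estimate. For bounded `u` upper semicontinuous
and `v` lower semicontinuous on `[0,T] × O` with `O ⊆ ℝᵈ` nonempty compact, the penalized
suprema `Θ_n = sup (u(t,x₁) - v(t,x₂) - (n/2)|x₁-x₂|²)` are attained, converge to
`sup_{[0,T]×O} (u - v)`, and along a subsequence of any choice of maximizers the
penalization `n·|x₁ⁿ - x₂ⁿ|²` tends to `0`. -/
theorem stmt_9 (d : ℕ) (O : Set (EuclideanSpace ℝ (Fin d))) (hO : O.Nonempty)
    (hOc : IsCompact O) (T : ℝ) (hT : 0 < T)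
    (u v : ℝ → EuclideanSpace ℝ (Fin d) → ℝ)
    (hu_usc : UpperSemicontinuousOn (fun p : ℝ × EuclideanSpace ℝ (Fin d) => u p.1 p.2)
      (Set.Icc 0 T ×ˢ O))
    (hv_lsc : LowerSemicontinuousOn (fun p : ℝ × EuclideanSpace ℝ (Fin d) => v p.1 p.2)
      (Set.Icc 0 T ×ˢ O))
    (Cu : ℝ) (hub : ∀ t ∈ Set.Icc (0:ℝ) T, ∀ x ∈ O, |u t x| ≤ Cu)
    (Cv : ℝ) (hvb : ∀ t ∈ Set.Icc (0:ℝ) T, ∀ x ∈ O, |v t x| ≤ Cv)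
    (Θ : ℕ → ℝ)
    (hΘ : ∀ n : ℕ, Θ n = sSup {c : ℝ | ∃ t ∈ Set.Icc (0:ℝ) T, ∃ x₁ ∈ O, ∃ x₂ ∈ O,
        c = u t x₁ - v t x₂ - ((n : ℝ) / 2) * ‖x₁ - x₂‖ ^ 2}) :
    (∀ n : ℕ, ∃ t ∈ Set.Icc (0:ℝ) T, ∃ x₁ ∈ O, ∃ x₂ ∈ O,
        u t x₁ - v t x₂ - ((n : ℝ) / 2) * ‖x₁ - x₂‖ ^ 2 = Θ n) ∧
    Tendsto Θ atTop
      (nhds (sSup {c : ℝ | ∃ t ∈ Set.Icc (0:ℝ) T, ∃ x ∈ O, c = u t x - v t x})) ∧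
    (∀ (t : ℕ → ℝ) (x₁ x₂ : ℕ → EuclideanSpace ℝ (Fin d)),
      (∀ n : ℕ, t n ∈ Set.Icc (0:ℝ) T ∧ x₁ n ∈ O ∧ x₂ n ∈ O ∧
        u (t n) (x₁ n) - v (t n) (x₂ n) - ((n : ℝ) / 2) * ‖x₁ n - x₂ n‖ ^ 2 = Θ n) →
      ∃ φ : ℕ → ℕ, StrictMono φ ∧
        Tendsto (fun k => (φ k : ℝ) * ‖x₁ (φ k) - x₂ (φ k)‖ ^ 2) atTop (nhds 0)) := by
  classical
  obtain ⟨x0, hx0⟩ := hO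
  have h0T : (0:ℝ) ∈ Set.Icc (0:ℝ) T := ⟨le_rfl, hT.le⟩
  set K : Set (ℝ × EuclideanSpace ℝ (Fin d) × EuclideanSpace ℝ (Fin d)) :=
    Set.Icc 0 T ×ˢ (O ×ˢ O) with hK
  have hKc : IsCompact K := isCompact_Icc.prod (hOc.prod hOc)
  have hKne : K.Nonempty := ⟨(0, x0, x0), h0T, hx0, hx0⟩
  have hG : UpperSemicontinuousOn
      (fun p : ℝ × EuclideanSpace ℝ (Fin d) × EuclideanSpace ℝ (Fin d) =>
        u p.1 p.2.1 + -v p.1 p.2.2) K := by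
    apply UpperSemicontinuousOn.add
    · exact hu_usc.comp
        (g := fun p : ℝ × EuclideanSpace ℝ (Fin d) × EuclideanSpace ℝ (Fin d) => (p.1, p.2.1))
        (by fun_prop) (fun p hp => ⟨hp.1, hp.2.1⟩)
    · have h := hv_lsc.comp
        (g := fun p : ℝ × EuclideanSpace ℝ (Fin d) × EuclideanSpace ℝ (Fin d) => (p.1, p.2.2))
        (t := K) (by fun_prop) (fun p hp => ⟨hp.1, hp.2.2⟩)
      intro x hx y hy
      have hy' : -v x.1 x.2.2 < y := hy
      have h1 := h x hx (-y) (show -y < v x.1 x.2.2 by linarith)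
      filter_upwards [h1] with z hz
      have hz' : -y < v z.1 z.2.2 := hz
      show -v z.1 z.2.2 < y
      linarith
  have hub' : ∀ n : ℕ, ∀ t ∈ Set.Icc (0:ℝ) T, ∀ x₁ ∈ O, ∀ x₂ ∈ O,
      u t x₁ - v t x₂ - ((n : ℝ) / 2) * ‖x₁ - x₂‖ ^ 2 ≤ Cu + Cv := by
    intro n t ht x₁ h1 x₂ h2
    have a := (abs_le.1 (hub t ht x₁ h1)).2
    have b := (abs_le.1 (hvb t ht x₂ h2)).1
    have c : 0 ≤ ((n : ℝ) / 2) * ‖x₁ - x₂‖ ^ 2 := by positivity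
    linarith
  have hle : ∀ n : ℕ, ∀ t ∈ Set.Icc (0:ℝ) T, ∀ x₁ ∈ O, ∀ x₂ ∈ O,
      u t x₁ - v t x₂ - ((n : ℝ) / 2) * ‖x₁ - x₂‖ ^ 2 ≤ Θ n := by
    intro n t ht x₁ h1 x₂ h2
    rw [hΘ]
    refine le_csSup ⟨Cu + Cv, ?_⟩ ⟨t, ht, x₁, h1, x₂, h2, rfl⟩
    rintro c ⟨t, ht, x₁, h1, x₂, h2, rfl⟩
    exact hub' n t ht x₁ h1 x₂ h2
  have hatt : ∀ n : ℕ, ∃ t ∈ Set.Icc (0:ℝ) T, ∃ x₁ ∈ O, ∃ x₂ ∈ O,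
        u t x₁ - v t x₂ - ((n : ℝ) / 2) * ‖x₁ - x₂‖ ^ 2 = Θ n := by
    intro n
    have hF := hG.add (ContinuousOn.upperSemicontinuousOn
      (f := fun p : ℝ × EuclideanSpace ℝ (Fin d) × EuclideanSpace ℝ (Fin d) =>
        -(((n : ℝ) / 2) * ‖p.2.1 - p.2.2‖ ^ 2)) (s := K) (by fun_prop))
    obtain ⟨⟨t, x₁, x₂⟩, ⟨ht, h1, h2⟩, hmax⟩ := hF.exists_isMaxOn hKne hKc
    refine ⟨t, ht, x₁, h1, x₂, h2, le_antisymm (hle n t ht x₁ h1 x₂ h2) ?_⟩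
    rw [hΘ]
    refine csSup_le ⟨_, 0, h0T, x0, hx0, x0, hx0, rfl⟩ ?_
    rintro c ⟨t', ht', x₁', h1', x₂', h2', rfl⟩
    have h := isMaxOn_iff.1 hmax (t', x₁', x₂') ⟨ht', h1', h2'⟩
    simp only at h
    linarith
  have hanti : Antitone Θ := by
    intro m n hmn
    obtain ⟨t, ht, x₁, h1, x₂, h2, h⟩ := hatt n
    have h' := hle m t ht x₁ h1 x₂ h2
    have h3 : (m : ℝ) ≤ n := by exact_mod_cast hmn
    have h4 : ((m : ℝ) / 2) * ‖x₁ - x₂‖ ^ 2 ≤ ((n : ℝ) / 2) * ‖x₁ - x₂‖ ^ 2 := by gcongr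
    linarith
  set S := sSup {c : ℝ | ∃ t ∈ Set.Icc (0:ℝ) T, ∃ x ∈ O, c = u t x - v t x} with hS
  have hSle : ∀ t ∈ Set.Icc (0:ℝ) T, ∀ x ∈ O, u t x - v t x ≤ S := by
    intro t ht x hx
    refine le_csSup ⟨Cu + Cv, ?_⟩ ⟨t, ht, x, hx, rfl⟩
    rintro c ⟨t, ht, x, hx, rfl⟩
    simpa using hub' 0 t ht x hx x hx
  have hSΘ : ∀ n, S ≤ Θ n := by
    intro n
    refine csSup_le ⟨_, 0, h0T, x0, hx0, rfl⟩ ?_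
    rintro c ⟨t, ht, x, hx, rfl⟩
    simpa using hle n t ht x hx x hx
  have hlim : Tendsto Θ atTop (nhds S) := by
    refine tendsto_order.2 ⟨fun a ha => Eventually.of_forall fun n => ha.trans_le (hSΘ n), ?_⟩
    intro c hc
    suffices h : ∃ n, Θ n < c by
      obtain ⟨n, hn⟩ := h
      filter_upwards [eventually_ge_atTop n] with m hm
      exact (hanti hm).trans_lt hn
    by_contra! hcon
    choose t ht x₁ h1 x₂ h2 hx using hatt
    obtain ⟨⟨s, y₁, y₂⟩, hmem, φ, hφ, hφl⟩ :=
      hKc.tendsto_subseq (x := fun n => (t n, x₁ n, x₂ n)) (fun n => ⟨ht n, h1 n, h2 n⟩)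
    have hbd : ∀ n : ℕ, (n : ℝ) * ‖x₁ n - x₂ n‖ ^ 2 ≤ 2 * (Cu + Cv - S) := by
      intro n
      have a := hub' 0 (t n) (ht n) (x₁ n) (h1 n) (x₂ n) (h2 n)
      simp only [Nat.cast_zero, zero_div, zero_mul, sub_zero] at a
      have b := hx n
      have b' := hSΘ n
      linarith
    have hz : Tendsto (fun n : ℕ => ‖x₁ n - x₂ n‖ ^ 2) atTop (nhds 0) := by
      refine squeeze_zero' (Eventually.of_forall fun n => by positivity) ?_
        (tendsto_const_div_atTop_nhds_zero_nat (2 * (Cu + Cv - S)))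
      filter_upwards [eventually_gt_atTop 0] with n hn
      have hn' : (0:ℝ) < n := by exact_mod_cast hn
      rw [le_div_iff₀ hn', mul_comm]
      exact hbd n
    have hl2 : Tendsto (fun k => ‖x₁ (φ k) - x₂ (φ k)‖ ^ 2) atTop (nhds (‖y₁ - y₂‖ ^ 2)) := by
      have e1 : Tendsto (fun k => x₁ (φ k)) atTop (nhds y₁) := hφl.snd_nhds.fst_nhds
      have e2 : Tendsto (fun k => x₂ (φ k)) atTop (nhds y₂) := hφl.snd_nhds.snd_nhds
      exact (e1.sub e2).norm.pow 2
    have heq := tendsto_nhds_unique hl2 (hz.comp hφ.tendsto_atTop)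
    have hyy : y₁ = y₂ := by
      have h := pow_eq_zero_iff (two_ne_zero) |>.1 heq
      exact sub_eq_zero.1 (norm_eq_zero.1 h)
    subst hyy
    have hlt : u s y₁ + -v s y₁ < c := by
      have := hSle s hmem.1 y₁ hmem.2.1
      linarith
    have hev := hG (s, y₁, y₁) hmem c hlt
    have hmemK : ∀ k, ((fun n => (t n, x₁ n, x₂ n)) ∘ φ) k ∈ K :=
      fun k => ⟨ht _, h1 _, h2 _⟩
    have hφK := tendsto_nhdsWithin_iff.2 ⟨hφl, Eventually.of_forall hmemK⟩
    obtain ⟨k, hk⟩ := (hφK.eventually hev).exists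
    have hk' : u (t (φ k)) (x₁ (φ k)) + -v (t (φ k)) (x₂ (φ k)) < c := hk
    have b := hx (φ k)
    have b' := hcon (φ k)
    have b3 : 0 ≤ ((φ k : ℕ) : ℝ) / 2 * ‖x₁ (φ k) - x₂ (φ k)‖ ^ 2 := by positivity
    linarith
  refine ⟨hatt, hlim, ?_⟩
  intro t x₁ x₂ h
  have hφ : StrictMono (fun k : ℕ => 2 * k) := fun a b hab => by
    show 2 * a < 2 * b
    omega
  refine ⟨fun k => 2 * k, hφ, ?_⟩
  have hd : Tendsto (fun k => 4 * (Θ k - Θ (2 * k))) atTop (nhds 0) := by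
    have h1 := (hlim.sub (hlim.comp hφ.tendsto_atTop)).const_mul 4
    simpa using h1
  refine squeeze_zero (fun k => by positivity) (fun k => ?_) hd
  obtain ⟨ht, h1, h2, he⟩ := h (2 * k)
  have h3 := hle k _ ht _ h1 _ h2
  push_cast at he ⊢
  linarith
end

section
/- Let h : ℝ → ℝ be Lipschitz continuous and bounded, let λ : ℝ → [0,∞) be continuously differentiable with λ and λ′ bounded, let f(x) := exp(∫₀ˣ λ(u) du) satisfy inf f > 0 and sup f < ∞, and let F(x) := ∫₀ˣ f(u) du with inverse F⁻¹ : ℝ → ℝ. Then each of the following three maps from ℝ² to ℝ is bounded and Lipschitz continuous: (y, q) ↦ h(F⁻¹(q + F(y))); (y, q) ↦ λ(y)·h(F⁻¹(q + F(y))); and (y, q) ↦ h(F⁻¹(q + F(y)))·( 1 − f(F⁻¹(q + F(y)))/f(y) ). -/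
/-- bounded and Lipschitz -/
def BddLip {α : Type*} [PseudoMetricSpace α] (g : α → ℝ) : Prop :=
  (∃ C : ℝ, ∀ p, |g p| ≤ C) ∧ ∃ L : NNReal, LipschitzWith L g

theorem lip_of_real {α : Type*} [PseudoMetricSpace α] {g : α → ℝ} (K : ℝ)
    (h : ∀ x y, |g x - g y| ≤ K * dist x y) : ∃ L : NNReal, LipschitzWith L g := by
  refine ⟨K.toNNReal, LipschitzWith.of_dist_le_mul fun x y => ?_⟩
  rw [Real.dist_eq]
  refine (h x y).trans ?_
  gcongr
  exact Real.le_coe_toNNReal K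

theorem BddLip.mul {α : Type*} [PseudoMetricSpace α] {g k : α → ℝ} (hg : BddLip g)
    (hk : BddLip k) : BddLip (fun p => g p * k p) := by
  obtain ⟨⟨C, hC⟩, L, hL⟩ := hg
  obtain ⟨⟨D, hD⟩, M, hM⟩ := hk
  refine ⟨⟨C * D, fun p => ?_⟩, lip_of_real (C * M + L * D) fun x y => ?_⟩
  · rw [abs_mul]
    exact mul_le_mul (hC p) (hD p) (abs_nonneg _) ((abs_nonneg _).trans (hC p))
  · have h1 := hL.dist_le_mul x y
    have h2 := hM.dist_le_mul x y
    rw [Real.dist_eq] at h1 h2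
    have e : g x * k x - g y * k y = g x * (k x - k y) + (g x - g y) * k y := by ring
    rw [e]
    refine (abs_add_le _ _).trans ?_
    rw [abs_mul, abs_mul]
    have a1 := mul_le_mul (hC x) h2 (abs_nonneg _) ((abs_nonneg _).trans (hC x))
    have a2 := mul_le_mul h1 (hD y) (abs_nonneg _) ((abs_nonneg _).trans h1)
    linarith

theorem BddLip.comp {α β : Type*} [PseudoMetricSpace α] [PseudoMetricSpace β] {g : β → ℝ}
    (hg : BddLip g) {u : α → β} (hu : ∃ L : NNReal, LipschitzWith L u) :
    BddLip (fun p => g (u p)) := by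
  obtain ⟨⟨C, hC⟩, L, hL⟩ := hg
  obtain ⟨M, hM⟩ := hu
  exact ⟨⟨C, fun p => hC _⟩, _, hL.comp hM⟩

theorem BddLip.one_sub {α : Type*} [PseudoMetricSpace α] {g : α → ℝ} (hg : BddLip g) :
    BddLip (fun p => 1 - g p) := by
  obtain ⟨⟨C, hC⟩, L, hL⟩ := hg
  refine ⟨⟨1 + C, fun p => ?_⟩, lip_of_real L fun x y => ?_⟩
  · refine (abs_sub _ _).trans ?_
    rw [abs_one]
    linarith [hC p]
  · have h1 := hL.dist_le_mul x y
    rw [Real.dist_eq] at h1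
    rw [show 1 - g x - (1 - g y) = -(g x - g y) by ring, abs_neg]
    exact h1

theorem BddLip.inv {α : Type*} [PseudoMetricSpace α] {g : α → ℝ} (hg : BddLip g)
    {m : ℝ} (hm : 0 < m) (h : ∀ x, m ≤ g x) : BddLip (fun p => (g p)⁻¹) := by
  obtain ⟨⟨C, hC⟩, L, hL⟩ := hg
  refine ⟨⟨m⁻¹, fun p => ?_⟩, lip_of_real (L / (m * m)) fun x y => ?_⟩
  · rw [abs_of_nonneg (inv_nonneg.2 (hm.le.trans (h p)))]
    exact inv_anti₀ hm (h p)
  · have h1 := hL.dist_le_mul x y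
    rw [Real.dist_eq] at h1
    have px := hm.trans_le (h x)
    have py := hm.trans_le (h y)
    rw [inv_sub_inv px.ne' py.ne', abs_div, abs_sub_comm, abs_of_pos (mul_pos px py),
      div_mul_eq_mul_div]
    exact div_le_div₀ (by positivity) h1 (by positivity)
      (mul_le_mul (h x) (h y) hm.le px.le)

theorem lip_of_deriv {g g' : ℝ → ℝ} (hg : ∀ x, HasDerivAt g (g' x) x) (K : ℝ)
    (hK : ∀ x, |g' x| ≤ K) : ∃ L : NNReal, LipschitzWith L g := by
  refine ⟨K.toNNReal, lipschitzWith_of_nnnorm_deriv_le (fun x => (hg x).differentiableAt)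
    fun x => ?_⟩
  rw [(hg x).deriv, ← NNReal.coe_le_coe, coe_nnnorm]
  exact (hK x).trans (Real.le_coe_toNNReal K)

/-- for `h` bounded Lipschitz, `λ ≥ 0` of class `C¹` with `λ, λ'` bounded,
`f(x) = exp(∫₀ˣ λ)` bounded away from `0` and `∞`, `F(x) = ∫₀ˣ f` with inverse `F⁻¹`, each
of the coefficient maps `(y,q) ↦ h(F⁻¹(q + F(y)))`, `(y,q) ↦ λ(y)·h(F⁻¹(q + F(y)))` and
`(y,q) ↦ h(F⁻¹(q + F(y)))·(1 - f(F⁻¹(q + F(y)))/f(y))` is bounded and Lipschitz on `ℝ²`. -/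
theorem stmt_16 (h : ℝ → ℝ) (hh_l : ∃ L : NNReal, LipschitzWith L h)
    (hh_b : ∃ C : ℝ, ∀ x, |h x| ≤ C)
    (lam : ℝ → ℝ) (hlam_nonneg : ∀ x, 0 ≤ lam x) (hlam_smooth : ContDiff ℝ 1 lam)
    (hlam_b : ∃ C : ℝ, ∀ x, |lam x| ≤ C) (hlam'_b : ∃ C : ℝ, ∀ x, |deriv lam x| ≤ C)
    (f : ℝ → ℝ) (hf : ∀ x, f x = Real.exp (∫ u in (0:ℝ)..x, lam u))
    (hf_below : ∃ m : ℝ, 0 < m ∧ ∀ x, m ≤ f x) (hf_above : ∃ M : ℝ, ∀ x, f x ≤ M)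
    (F : ℝ → ℝ) (hF : ∀ x, F x = ∫ u in (0:ℝ)..x, f u)
    (Finv : ℝ → ℝ) (hFinv : ∀ x, Finv (F x) = x) (hFinv' : ∀ x, F (Finv x) = x) :
    ((∃ C : ℝ, ∀ p : ℝ × ℝ, |h (Finv (p.2 + F p.1))| ≤ C) ∧
      ∃ L : NNReal, LipschitzWith L (fun p : ℝ × ℝ => h (Finv (p.2 + F p.1)))) ∧
    ((∃ C : ℝ, ∀ p : ℝ × ℝ, |lam p.1 * h (Finv (p.2 + F p.1))| ≤ C) ∧
      ∃ L : NNReal, LipschitzWith L (fun p : ℝ × ℝ => lam p.1 * h (Finv (p.2 + F p.1)))) ∧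
    ((∃ C : ℝ, ∀ p : ℝ × ℝ,
        |h (Finv (p.2 + F p.1)) * (1 - f (Finv (p.2 + F p.1)) / f p.1)| ≤ C) ∧
      ∃ L : NNReal, LipschitzWith L (fun p : ℝ × ℝ =>
        h (Finv (p.2 + F p.1)) * (1 - f (Finv (p.2 + F p.1)) / f p.1))) := by
  obtain ⟨Cl, hCl⟩ := hlam_b
  obtain ⟨Cl', hCl'⟩ := hlam'_b
  obtain ⟨m, hm, hmf⟩ := hf_below
  obtain ⟨M, hM⟩ := hf_above
  have fpos : ∀ x, 0 < f x := fun x => hm.trans_le (hmf x)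
  have habs : ∀ x, |f x| ≤ M := fun x => by rw [abs_of_pos (fpos x)]; exact hM x
  have lc : Continuous lam := hlam_smooth.continuous
  have hfd : ∀ x, HasDerivAt f (f x * lam x) x := by
    intro x
    have h1 : HasDerivAt (fun x => ∫ u in (0:ℝ)..x, lam u) (lam x) x :=
      lc.integral_hasStrictDerivAt 0 x |>.hasDerivAt
    have h2 := h1.exp
    rw [← hf x] at h2
    rwa [show f = fun x => Real.exp (∫ u in (0:ℝ)..x, lam u) from funext hf] at h2 ⊢
  have fc : Continuous f := continuous_iff_continuousAt.2 fun x => (hfd x).continuousAt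
  have hFd : ∀ x, HasDerivAt F (f x) x := by
    intro x
    rw [show F = fun x => ∫ u in (0:ℝ)..x, f u from funext hF]
    exact (fc.integral_hasStrictDerivAt 0 x).hasDerivAt
  have Bf : BddLip f := ⟨⟨M, habs⟩, lip_of_deriv hfd (M * Cl) fun x => by
    rw [abs_mul]
    exact mul_le_mul (habs x) (hCl x) (abs_nonneg _) ((abs_nonneg _).trans (habs x))⟩
  have Bl : BddLip lam := ⟨⟨Cl, hCl⟩, lip_of_deriv
    (fun x => (hlam_smooth.differentiable (by norm_num) x).hasDerivAt) Cl' hCl'⟩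
  have Bh : BddLip h := ⟨hh_b, hh_l⟩
  have hexp : ∀ x y, x ≤ y → m * (y - x) ≤ F y - F x := fun x y hxy =>
    mul_sub_le_image_sub_of_le_deriv (fun x => (hFd x).differentiableAt)
      (fun x => by rw [(hFd x).deriv]; exact hmf x) hxy
  have hexp' : ∀ x y, m * |x - y| ≤ |F x - F y| := by
    intro x y
    rcases le_total x y with hxy | hxy
    · rw [abs_sub_comm, abs_sub_comm (F x), abs_of_nonneg (sub_nonneg.2 hxy)]
      exact (hexp x y hxy).trans (le_abs_self _)
    · rw [abs_of_nonneg (sub_nonneg.2 hxy)]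
      exact (hexp y x hxy).trans (le_abs_self _)
  obtain ⟨LI, hLI⟩ : ∃ L : NNReal, LipschitzWith L Finv := by
    refine lip_of_real m⁻¹ fun x y => ?_
    have := hexp' (Finv x) (Finv y)
    rw [hFinv', hFinv'] at this
    rw [Real.dist_eq, inv_mul_eq_div, le_div_iff₀ hm]
    linarith
  obtain ⟨LF, hLF⟩ := lip_of_deriv hFd M habs
  have hfst : ∃ L : NNReal, LipschitzWith L (fun p : ℝ × ℝ => p.1) := ⟨1, LipschitzWith.prod_fst⟩
  have hu : ∃ L : NNReal, LipschitzWith L (fun p : ℝ × ℝ => Finv (p.2 + F p.1)) :=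
    ⟨_, hLI.comp (LipschitzWith.prod_snd.add (hLF.comp LipschitzWith.prod_fst))⟩
  have B1 := Bh.comp hu
  refine ⟨B1, (Bl.comp hfst).mul B1, ?_⟩
  have B3 := B1.mul ((Bf.comp hu).mul ((Bf.inv hm hmf).comp hfst)).one_sub
  simp only [← div_eq_mul_inv] at B3
  exact B3
end
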